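/- ∑_{n=0}^∞ ((1)ₙ)³ (5/4)ₙ (7/4)ₙ / ((3/2)ₙ (3/2)ₙ (2)ₙ (2)ₙ n!) = −(8/3)·Li₂(3 − 2√2) + 2π²/9 − (8/3)·log²2 − (8/3)·log²(√2+1) + (16/3)·log(√2+1)·log 2. -/

import Mathlib

noncomputable def poch (a : ℝ) (n : ℕ) : ℝ := ∏ i ∈ Finset.range n, (a + i)

/-- Dilogarithm `Li₂(x) = ∑_{k ≥ 1} x^k / k²`. -/
noncomputable def Li2 (x : ℝ) : ℝ := ∑' k : ℕ, x ^ (k + 1) / ((k : ℝ) + 1)^2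

section Dilogarithm

open Real Set Filter Topology

/-- Termwise differentiation of a power series whose derivative has coefficients bounded by `1`. -/
lemma hasDerivAt_tsum_pow_succ {a : ℕ → ℝ} (ha : ∀ n, |a n| ≤ 1) {x : ℝ} (hx : |x| < 1) :
    HasDerivAt (fun y => ∑' n : ℕ, a n * y ^ (n + 1) / ((n : ℝ) + 1)) (∑' n : ℕ, a n * x ^ n) x := by
  obtain ⟨ρ, hxρ, hρ⟩ := exists_between hx
  have hρ0 : 0 < ρ := (abs_nonneg x).trans_lt hxρ
  refine hasDerivAt_tsum_of_isPreconnected (𝕜 := ℝ) (F := ℝ)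
    (g := fun n y => a n * y ^ (n + 1) / ((n : ℝ) + 1)) (g' := fun n y => a n * y ^ n)
    (t := Metric.ball (0 : ℝ) ρ) (y₀ := 0)
    (summable_geometric_of_lt_one hρ0.le hρ) Metric.isOpen_ball
    (convex_ball (0 : ℝ) ρ).isPreconnected (fun n y _ => ?_) (fun n y hy => ?_)
    (Metric.mem_ball_self hρ0) (by simp) (by simpa using hxρ)
  · have h := ((hasDerivAt_pow (n + 1) y).const_mul (a n)).div_const ((n : ℝ) + 1)
    refine h.congr_deriv ?_
    have : (n : ℝ) + 1 ≠ 0 := by positivity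
    push_cast
    field_simp
  · rw [mem_ball_zero_iff, norm_eq_abs] at hy
    rw [norm_mul, norm_pow, norm_eq_abs, norm_eq_abs]
    calc |a n| * |y| ^ n ≤ 1 * ρ ^ n := by
          gcongr
          exact ha n
      _ = ρ ^ n := one_mul _

lemma eq_of_hasDerivAt_zero {f : ℝ → ℝ} {a b : ℝ} (hab : a < b) (hc : ContinuousOn f (Icc a b))
    (hd : ∀ x ∈ Ioo a b, HasDerivAt f 0 x) : f b = f a := by
  obtain ⟨c, -, h⟩ := exists_hasDerivAt_eq_slope f (fun _ => 0) hab hc hd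
  have : b - a ≠ 0 := by linarith
  field_simp at h
  linarith

lemma continuousAt_log_mul_zero {g : ℝ → ℝ} {g' : ℝ} (hg : HasDerivAt g g' 0) (h0 : g 0 = 0) :
    ContinuousAt (fun x => log x * g x) 0 := by
  rw [← continuousWithinAt_compl_self, ContinuousWithinAt, log_zero, zero_mul]
  have h1 : Tendsto (fun x : ℝ => x * log x) (𝓝[≠] 0) (𝓝 0) := by
    simpa using (continuous_mul_log.tendsto 0).mono_left nhdsWithin_le_nhds
  have h2 := h1.mul (hasDerivAt_iff_tendsto_slope.1 hg)
  rw [zero_mul] at h2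
  refine h2.congr' ?_
  filter_upwards [self_mem_nhdsWithin] with x hx
  have : x ≠ 0 := hx
  rw [slope_def_field, h0]
  field_simp
  ring

lemma hasDerivAt_Li2 {x : ℝ} (hx : |x| < 1) (hx0 : x ≠ 0) :
    HasDerivAt Li2 (-log (1 - x) / x) x := by
  have h := hasDerivAt_tsum_pow_succ (a := fun n => 1 / ((n : ℝ) + 1)) (fun n => ?_) hx
  · convert h using 1
    · funext y
      refine tsum_congr fun n => ?_
      field_simp
    · rw [← (hasSum_pow_div_log_of_abs_lt_one hx).tsum_eq, ← tsum_div_const]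
      refine tsum_congr fun n => ?_
      field_simp
      ring
  · rw [abs_of_pos (by positivity), div_le_one (by positivity)]
    linarith [n.cast_nonneg (α := ℝ)]

lemma summable_one_div_succ_sq : Summable fun n : ℕ => 1 / ((n : ℝ) + 1) ^ 2 := by
  simpa using (summable_nat_add_iff 1).2 (Real.summable_one_div_nat_pow.2 one_lt_two)

lemma continuousOn_Li2 : ContinuousOn Li2 (Icc (-1) 1) := by
  refine continuousOn_tsum (fun n => by fun_prop) summable_one_div_succ_sq fun n x hx => ?_
  rw [norm_div, norm_pow, norm_eq_abs, norm_of_nonneg (by positivity : (0 : ℝ) ≤ ((n : ℝ) + 1) ^ 2)]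
  gcongr
  exact pow_le_one₀ (abs_nonneg x) (abs_le.2 hx)

lemma HasDerivAt.comp_Li2 {f : ℝ → ℝ} {f' x : ℝ} (hf : HasDerivAt f f' x) (hx : |f x| < 1)
    (hx0 : f x ≠ 0) : HasDerivAt (fun y => Li2 (f y)) (-Real.log (1 - f x) / f x * f') x :=
  (hasDerivAt_Li2 hx hx0).comp x hf

lemma ContinuousOn.comp_Li2 {f : ℝ → ℝ} {s : Set ℝ} (hf : ContinuousOn f s)
    (hs : ∀ x ∈ s, f x ∈ Icc (-1) 1) : ContinuousOn (fun y => Li2 (f y)) s :=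
  continuousOn_Li2.comp hf hs

lemma Li2_zero : Li2 0 = 0 := by simp [Li2]

lemma Li2_one : Li2 1 = π ^ 2 / 6 := by
  have h := (hasSum_nat_add_iff' 1).2 hasSum_zeta_two
  simpa [Li2] using h.tsum_eq

lemma Li2_neg_one : Li2 (-1) = -π ^ 2 / 12 := by
  have hs := summable_one_div_succ_sq
  have ha : Summable fun n : ℕ => (-1 : ℝ) ^ (n + 1) / ((n : ℝ) + 1) ^ 2 := by
    refine hs.of_norm_bounded fun n => ?_
    simp
  have hadd : Li2 1 + Li2 (-1) = Li2 1 / 2 := by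
    have he := fun (f : ℕ → ℝ) (hf : Summable f) => tsum_even_add_odd (f := f)
      (hf.comp_injective (mul_right_injective₀ two_ne_zero))
      (hf.comp_injective ((add_left_injective 1).comp (mul_right_injective₀ two_ne_zero)))
    have h1 := he _ (hs.add ha)
    rw [hs.tsum_add ha] at h1
    have h2 : Li2 1 = ∑' n : ℕ, 1 / ((n : ℝ) + 1) ^ 2 := by simp [Li2]
    have h3 : Li2 (-1) = ∑' n : ℕ, (-1 : ℝ) ^ (n + 1) / ((n : ℝ) + 1) ^ 2 := rfl
    rw [h3, h2, ← h1, ← tsum_div_const]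
    have hz : ∀ k : ℕ, 1 / (((2 * k : ℕ) : ℝ) + 1) ^ 2
        + (-1 : ℝ) ^ (2 * k + 1) / (((2 * k : ℕ) : ℝ) + 1) ^ 2 = 0 := fun k => by
      rw [pow_succ (-1 : ℝ), pow_mul]; norm_num; ring
    simp only [hz, tsum_zero, zero_add]
    refine tsum_congr fun k => ?_
    rw [show 2 * k + 1 + 1 = 2 * (k + 1) by ring, pow_mul]
    push_cast
    field_simp
    norm_num
    ring
  rw [Li2_one] at hadd
  linarith

lemma Li2_half : Li2 (1 / 2) = π ^ 2 / 12 - log 2 ^ 2 / 2 := by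
  have hlog : ∀ x : ℝ, x ≠ 1 → HasDerivAt (fun y => log (1 - y)) (-1 / (1 - x)) x := fun x hx =>
    ((hasDerivAt_id x).const_sub 1).log (sub_ne_zero.2 hx.symm)
  have h := eq_of_hasDerivAt_zero (f := fun x => Li2 x + Li2 (1 - x) + log x * log (1 - x))
    (a := 0) (b := 1 / 2) (by norm_num) ?_ ?_
  · have hl : log (1 / 2) = -log 2 := by rw [one_div, log_inv]
    norm_num [Li2_zero, Li2_one] at h
    norm_num at hl ⊢
    rw [hl] at h
    linarith
  · refine ((continuousOn_Li2.mono ?_).add (ContinuousOn.comp_Li2 (by fun_prop) ?_)).add ?_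
    · exact Icc_subset_Icc (by norm_num) (by norm_num)
    · rintro x ⟨h0, h1⟩
      constructor <;> linarith
    · rintro x ⟨h0, h1⟩
      refine ContinuousAt.continuousWithinAt ?_
      rcases h0.eq_or_lt with rfl | h0
      · exact continuousAt_log_mul_zero (hlog 0 (by norm_num)) (by simp)
      · exact (continuousAt_log h0.ne').mul (hlog x (by linarith)).continuousAt
  · rintro x ⟨h0, h1⟩
    have hx1 : (1 : ℝ) - x ≠ 0 := by linarith
    refine (((hasDerivAt_Li2 (by rw [abs_of_pos] <;> linarith) h0.ne').add
      (((hasDerivAt_id' x).const_sub 1).comp_Li2 (by rw [abs_of_pos] <;> linarith) hx1)).add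
      ((hasDerivAt_log h0.ne').mul (hlog x (by linarith)))).congr_deriv ?_
    rw [sub_sub_cancel]
    field_simp
    ring

/-- The odd part of the dilogarithm under the involution `t ↦ (1 - t) / (1 + t)`. -/
lemma Li2_sub_Li2_neg {t : ℝ} (h0 : 0 < t) (h1 : t < 1) :
    Li2 t - Li2 (-t) + Li2 ((1 - t) / (1 + t)) - Li2 (-((1 - t) / (1 + t)))
      + log t * log ((1 - t) / (1 + t)) = π ^ 2 / 4 := by
  have hw : ∀ x : ℝ, -1 < x →
      HasDerivAt (fun y : ℝ => (1 - y) / (1 + y)) (-2 / (1 + x) ^ 2) x := fun x hx => by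
    have hx' : 1 + x ≠ 0 := by linarith
    refine (((hasDerivAt_id' x).const_sub 1).div ((hasDerivAt_id' x).const_add 1)
      hx').congr_deriv ?_
    field_simp
    ring
  have hlog : ∀ x : ℝ, -1 < x → x < 1 →
      HasDerivAt (fun y : ℝ => log ((1 - y) / (1 + y))) (-2 / (1 - x ^ 2)) x := fun x hx hx1 => by
    have hx' : 1 + x ≠ 0 := by linarith
    have hx'' : 1 - x ≠ 0 := by linarith
    have hx3 : 1 - x ^ 2 ≠ 0 := by
      rw [show 1 - x ^ 2 = (1 - x) * (1 + x) by ring]; positivity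
    refine ((hw x hx).log (div_ne_zero hx'' hx')).congr_deriv ?_
    field_simp
    ring
  have hmem : ∀ x ∈ Icc 0 t, (1 - x) / (1 + x) ∈ Icc (-1 : ℝ) 1 := fun x hx => by
    have : 0 < 1 + x := by linarith [hx.1]
    rw [mem_Icc, le_div_iff₀ this, div_le_iff₀ this]
    constructor <;> linarith [hx.1]
  have hwc : ContinuousOn (fun y : ℝ => (1 - y) / (1 + y)) (Icc 0 t) := fun x hx =>
    (hw x (by linarith [hx.1])).continuousAt.continuousWithinAt
  have h := eq_of_hasDerivAt_zero (f := fun t => Li2 t - Li2 (-t) + Li2 ((1 - t) / (1 + t))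
    - Li2 (-((1 - t) / (1 + t))) + log t * log ((1 - t) / (1 + t))) h0 ?_ ?_
  · rw [h]
    norm_num [Li2_zero, Li2_one, Li2_neg_one]
    ring
  · refine ((((continuousOn_Li2.mono ?_).sub (ContinuousOn.comp_Li2 (by fun_prop) ?_)).add
      (hwc.comp_Li2 hmem)).sub (hwc.fun_neg.comp_Li2 ?_)).add ?_
    · exact Icc_subset_Icc (by norm_num) h1.le
    · rintro x ⟨hx0, hx1⟩
      constructor <;> linarith
    · intro x hx
      have := hmem x hx
      exact ⟨by linarith [this.2], by linarith [this.1]⟩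
    · rintro x ⟨hx0, hx1⟩
      refine ContinuousAt.continuousWithinAt ?_
      rcases hx0.eq_or_lt with rfl | hx0
      · exact continuousAt_log_mul_zero (hlog 0 (by norm_num) (by norm_num)) (by simp)
      · exact (continuousAt_log hx0.ne').mul (hlog x (by linarith) (by linarith)).continuousAt
  · rintro x ⟨hx0, hx1⟩
    have hx' : 0 < 1 + x := by linarith
    have hx'' : 0 < 1 - x := by linarith
    have hx3 : 1 - x ^ 2 ≠ 0 := by
      rw [show 1 - x ^ 2 = (1 - x) * (1 + x) by ring]; positivity
    have hw0 : 0 < (1 - x) / (1 + x) := by positivity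
    have hw1 : (1 - x) / (1 + x) < 1 := by rw [div_lt_one hx']; linarith
    have hxa : |x| < 1 := by rw [abs_of_pos] <;> linarith
    have hwa : |(1 - x) / (1 + x)| < 1 := by rwa [abs_of_pos hw0]
    refine (((((hasDerivAt_Li2 hxa hx0.ne').sub
      ((hasDerivAt_neg' x).comp_Li2 (by rwa [abs_neg]) (neg_ne_zero.2 hx0.ne'))).add
      ((hw x (by linarith)).comp_Li2 hwa hw0.ne')).sub
      ((hw x (by linarith)).fun_neg.comp_Li2 (by simpa using hwa) (neg_ne_zero.2 hw0.ne'))).add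
      ((hasDerivAt_log hx0.ne').mul (hlog x (by linarith) (by linarith)))).congr_deriv ?_
    simp only [sub_neg_eq_add]
    rw [show 1 - (1 - x) / (1 + x) = 2 * x / (1 + x) by field_simp; ring,
      show 1 + (1 - x) / (1 + x) = 2 / (1 + x) by field_simp; ring,
      log_div (by positivity) hx'.ne', log_div (by positivity) hx'.ne', log_div hx''.ne' hx'.ne',
      log_mul (by positivity) hx0.ne']
    field_simp
    ring

/-- A one-parameter specialisation of the five-term relation. -/
lemma Li2_five_term {t : ℝ} (h0 : 0 < t) (h1 : t < 1) :
    Li2 t + Li2 (-t) - Li2 (-t ^ 2) + Li2 (t * (1 - t) / (1 + t)) - Li2 (t * (1 + t) / (1 + t ^ 2))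
      = log (1 - t) * log (1 + t) - log (1 - t) * log (1 + t ^ 2) - log (1 + t) ^ 2 / 2
        + log (1 + t ^ 2) ^ 2 / 2 := by
  have hp : ∀ x : ℝ, 0 ≤ x →
      HasDerivAt (fun y : ℝ => y * (1 - y) / (1 + y)) ((1 - 2 * x - x ^ 2) / (1 + x) ^ 2) x :=
    fun x hx => by
      have hx' : 1 + x ≠ 0 := by linarith
      refine (((hasDerivAt_id' x).mul ((hasDerivAt_id' x).const_sub 1)).div
        ((hasDerivAt_id' x).const_add 1) hx').congr_deriv ?_
      simp only [Pi.mul_apply]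
      field_simp
      ring
  have hsq : ∀ x : ℝ, HasDerivAt (fun y : ℝ => y ^ 2) (2 * x) x := fun x => by
    simpa using hasDerivAt_pow 2 x
  have hq : ∀ x : ℝ,
      HasDerivAt (fun y : ℝ => y * (1 + y) / (1 + y ^ 2))
        ((1 + 2 * x - x ^ 2) / (1 + x ^ 2) ^ 2) x := fun x => by
    have hx' : 1 + x ^ 2 ≠ 0 := by positivity
    refine (((hasDerivAt_id' x).mul ((hasDerivAt_id' x).const_add 1)).div
      ((hsq x).const_add 1) hx').congr_deriv ?_
    simp only [Pi.mul_apply]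
    field_simp
    ring
  have hA : ∀ x : ℝ, x < 1 → HasDerivAt (fun y => log (1 - y)) (-1 / (1 - x)) x := fun x hx =>
    ((hasDerivAt_id x).const_sub 1).log (by simp only [id]; linarith)
  have hB : ∀ x : ℝ, 0 ≤ x → HasDerivAt (fun y => log (1 + y)) (1 / (1 + x)) x := fun x hx =>
    ((hasDerivAt_id x).const_add 1).log (by simp only [id]; linarith)
  have hC : ∀ x : ℝ, HasDerivAt (fun y => log (1 + y ^ 2)) (2 * x / (1 + x ^ 2)) x := fun x =>
    ((hsq x).const_add 1).log (by positivity)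
  have hp01 : ∀ x : ℝ, 0 ≤ x → x < 1 → 0 ≤ x * (1 - x) / (1 + x) ∧ x * (1 - x) / (1 + x) < 1 :=
    fun x hx hx1 => by
      have : 0 < 1 + x := by linarith
      have : 0 ≤ 1 - x := by linarith
      refine ⟨by positivity, ?_⟩
      rw [div_lt_one (by positivity)]
      nlinarith
  have hq01 : ∀ x : ℝ, 0 ≤ x → x < 1 →
      0 ≤ x * (1 + x) / (1 + x ^ 2) ∧ x * (1 + x) / (1 + x ^ 2) < 1 := fun x hx hx1 => by
    refine ⟨by positivity, ?_⟩
    rw [div_lt_one (by positivity)]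
    nlinarith
  have h := eq_of_hasDerivAt_zero (f := fun t => Li2 t + Li2 (-t) - Li2 (-t ^ 2)
    + Li2 (t * (1 - t) / (1 + t)) - Li2 (t * (1 + t) / (1 + t ^ 2))
    - (log (1 - t) * log (1 + t) - log (1 - t) * log (1 + t ^ 2) - log (1 + t) ^ 2 / 2
        + log (1 + t ^ 2) ^ 2 / 2)) h0 ?_ ?_
  · norm_num [Li2_zero] at h
    linarith
  · refine (((((continuousOn_Li2.mono ?_).add (ContinuousOn.comp_Li2 (by fun_prop) ?_)).sub
      (ContinuousOn.comp_Li2 (by fun_prop) ?_)).add (ContinuousOn.comp_Li2 ?_ ?_)).sub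
      (ContinuousOn.comp_Li2 ?_ ?_)).sub ?_
    · exact Icc_subset_Icc (by norm_num) h1.le
    · rintro x ⟨hx0, hx1⟩
      constructor <;> linarith
    · rintro x ⟨hx0, hx1⟩
      constructor <;> nlinarith
    · exact fun x hx => (hp x hx.1).continuousAt.continuousWithinAt
    · rintro x ⟨hx0, hx1⟩
      have := hp01 x hx0 (by linarith)
      constructor <;> linarith
    · exact fun x hx => (hq x).continuousAt.continuousWithinAt
    · rintro x ⟨hx0, hx1⟩
      have := hq01 x hx0 (by linarith)
      constructor <;> linarith
    · rintro x ⟨hx0, hx1⟩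
      have hAx := (hA x (by linarith)).continuousAt
      have hBx := (hB x hx0).continuousAt
      have hCx := (hC x).continuousAt
      exact ((((hAx.mul hBx).sub (hAx.mul hCx)).sub ((hBx.pow 2).div_const 2)).add
        ((hCx.pow 2).div_const 2)).continuousWithinAt
  · rintro x ⟨hx0, hx1⟩
    have hx' : 0 < 1 + x := by linarith
    have hx'' : 0 < 1 - x := by linarith
    have hx3 : 0 < 1 + x ^ 2 := by positivity
    have hxa : |x| < 1 := by rw [abs_of_pos] <;> linarith
    have hp0 : 0 < x * (1 - x) / (1 + x) := by positivity
    have hq0 : 0 < x * (1 + x) / (1 + x ^ 2) := by positivity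
    have hAx := hA x (by linarith)
    have hBx := hB x hx0.le
    have hCx := hC x
    refine ((((((hasDerivAt_Li2 hxa hx0.ne').add
      ((hasDerivAt_neg' x).comp_Li2 (by rwa [abs_neg]) (neg_ne_zero.2 hx0.ne'))).sub
      ((hsq x).fun_neg.comp_Li2 (by rw [abs_neg, abs_of_pos] <;> nlinarith) (by simp [hx0.ne']))).add
      ((hp x hx0.le).comp_Li2 (by rw [abs_of_pos hp0]; exact (hp01 x hx0.le (by linarith)).2)
        hp0.ne')).sub
      ((hq x).comp_Li2 (by rw [abs_of_pos hq0]; exact (hq01 x hx0.le (by linarith)).2) hq0.ne')).sub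
      ((((hAx.mul hBx).sub (hAx.mul hCx)).sub ((hBx.fun_pow 2).div_const 2)).add
        ((hCx.fun_pow 2).div_const 2))).congr_deriv ?_
    simp only [sub_neg_eq_add]
    rw [show 1 - x * (1 - x) / (1 + x) = (1 + x ^ 2) / (1 + x) by field_simp; ring,
      show 1 - x * (1 + x) / (1 + x ^ 2) = (1 - x) / (1 + x ^ 2) by field_simp; ring,
      log_div hx3.ne' hx'.ne', log_div hx''.ne' hx3.ne']
    field_simp
    ring

end Dilogarithm

section Binomial

open Real Set

lemma poch_succ (a : ℝ) (n : ℕ) : poch a (n + 1) = poch a n * (a + n) :=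
  Finset.prod_range_succ _ _

lemma poch_pos {a : ℝ} (ha : 0 < a) (n : ℕ) : 0 < poch a n :=
  Finset.prod_pos fun _ _ => by positivity

lemma poch_one (n : ℕ) : poch 1 n = n.factorial := by
  induction n with
  | zero => simp [poch]
  | succ n ih => rw [poch_succ, ih, Nat.factorial_succ]; push_cast; ring

lemma poch_two (n : ℕ) : poch 2 n = (n + 1).factorial := by
  induction n with
  | zero => simp [poch]
  | succ n ih => rw [poch_succ, ih, Nat.factorial_succ (n + 1)]; push_cast; ring

lemma poch_eq_ascPochhammer_eval (a : ℝ) (n : ℕ) : poch a n = (ascPochhammer ℝ n).eval a := by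
  induction n with
  | zero => simp [poch]
  | succ n ih => rw [poch_succ, ih, ascPochhammer_succ_eval]

/-- Coefficients of the power series of `1 / √(1 - x)`. -/
noncomputable def invSqrtCoeff (k : ℕ) : ℝ := poch (1 / 2) k / k.factorial

lemma invSqrtCoeff_pos (k : ℕ) : 0 < invSqrtCoeff k :=
  div_pos (poch_pos (by norm_num) k) (by positivity)

lemma invSqrtCoeff_succ (k : ℕ) :
    invSqrtCoeff (k + 1) = invSqrtCoeff k * ((1 / 2 + k) / (k + 1)) := by
  rw [invSqrtCoeff, invSqrtCoeff, poch_succ, Nat.factorial_succ]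
  push_cast
  field_simp

lemma invSqrtCoeff_le_one (k : ℕ) : invSqrtCoeff k ≤ 1 := by
  induction k with
  | zero => simp [invSqrtCoeff, poch]
  | succ k ih =>
    rw [invSqrtCoeff_succ]
    refine mul_le_one₀ ih (by positivity) ?_
    rw [div_le_one (by positivity)]
    linarith

lemma abs_invSqrtCoeff_le_one (k : ℕ) : |invSqrtCoeff k| ≤ 1 := by
  rw [abs_of_pos (invSqrtCoeff_pos k)]
  exact invSqrtCoeff_le_one k

lemma hasSum_invSqrtCoeff {x : ℝ} (hx : |x| < 1) :
    HasSum (fun k => invSqrtCoeff k * x ^ k) (1 / √(1 - x)) := by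
  have h := (one_div_one_sub_rpow_hasFPowerSeriesOnBall_zero (1 / 2)).hasSum (y := x)
    (by simpa [← enorm_eq_nnnorm, enorm_eq_ofReal_abs] using hx)
  rw [zero_add, ← sqrt_eq_rpow] at h
  have hk : ∀ k : ℕ, (FormalMultilinearSeries.ofScalars ℝ
      (fun n : ℕ => Ring.choose ((1 / 2 : ℝ) + n - 1) n) k fun _ => x)
        = invSqrtCoeff k * x ^ k := fun k => by
    have := Ring.factorial_nsmul_multichoose_eq_ascPochhammer (1 / 2 : ℝ) k
    rw [Polynomial.ascPochhammer_smeval_eq_eval, ← poch_eq_ascPochhammer_eval, nsmul_eq_mul] at this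
    rw [FormalMultilinearSeries.ofScalars_apply_eq, smul_eq_mul, ← Ring.multichoose_eq,
      invSqrtCoeff, ← this]
    field_simp
  simpa only [hk] using h

lemma tsum_invSqrtCoeff_succ {x : ℝ} (hx : |x| < 1) :
    ∑' k, invSqrtCoeff (k + 1) * x ^ k = 1 / (√(1 - x) * (1 + √(1 - x))) := by
  have hx1 : 0 < 1 - x := by linarith [le_abs_self x]
  have hp : 0 < √(1 - x) := sqrt_pos.2 hx1
  have hp2 : √(1 - x) ^ 2 = 1 - x := sq_sqrt hx1.le
  rcases eq_or_ne x 0 with rfl | hx0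
  · rw [tsum_eq_single 0 (fun k hk => by simp [hk])]
    norm_num [invSqrtCoeff, poch]
  · have h := ((hasSum_nat_add_iff' 1).2 (hasSum_invSqrtCoeff hx)).tsum_eq
    have h' : ∑' k, invSqrtCoeff (k + 1) * x ^ (k + 1)
        = x * ∑' k, invSqrtCoeff (k + 1) * x ^ k := by
      rw [← tsum_mul_left]
      exact tsum_congr fun k => by ring
    rw [h'] at h
    refine mul_left_cancel₀ hx0 (h.trans ?_)
    simp only [Finset.range_one, Finset.sum_singleton, pow_zero, mul_one]
    rw [show invSqrtCoeff 0 = 1 by simp [invSqrtCoeff, poch]]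
    clear h h'
    generalize √(1 - x) = p at *
    obtain rfl : x = 1 - p ^ 2 := by linarith
    field_simp
    ring

lemma tsum_invSqrtCoeff_div {x : ℝ} (hx : |x| < 1) :
    ∑' k : ℕ, invSqrtCoeff (k + 1) * x ^ (k + 1) / ((k : ℝ) + 1)
      = -2 * log ((1 + √(1 - x)) / 2) := by
  have hd : ∀ y : ℝ, |y| < 1 → HasDerivAt
      (fun z => ∑' k : ℕ, invSqrtCoeff (k + 1) * z ^ (k + 1) / ((k : ℝ) + 1)
        + 2 * log ((1 + √(1 - z)) / 2)) 0 y := fun y hy => by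
    have hy1 : 0 < 1 - y := by linarith [le_abs_self y]
    have hp : 0 < √(1 - y) := sqrt_pos.2 hy1
    refine ((hasDerivAt_tsum_pow_succ (fun k => abs_invSqrtCoeff_le_one (k + 1)) hy).add
      ((((((hasDerivAt_id' y).const_sub 1).sqrt hy1.ne').const_add 1).div_const 2).log
        (by positivity) |>.const_mul 2)).congr_deriv ?_
    rw [tsum_invSqrtCoeff_succ hy]
    field_simp
    ring
  rcases lt_trichotomy x 0 with h | rfl | h
  · have := eq_of_hasDerivAt_zero h
      (fun y hy => (hd y (by
        rw [abs_of_nonpos hy.2]; rw [abs_of_neg h] at hx; linarith [hy.1])).continuousAt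
          |>.continuousWithinAt)
      (fun y hy => hd y (by
        rw [abs_of_neg hy.2]; rw [abs_of_neg h] at hx; linarith [hy.1]))
    norm_num at this
    linarith
  · norm_num
  · have := eq_of_hasDerivAt_zero h
      (fun y hy => (hd y (by
        rw [abs_of_nonneg hy.1]; rw [abs_of_pos h] at hx; linarith [hy.2])).continuousAt
          |>.continuousWithinAt)
      (fun y hy => hd y (by
        rw [abs_of_pos hy.1]; rw [abs_of_pos h] at hx; linarith [hy.2]))
    norm_num at this
    linarith

lemma tsum_invSqrtCoeff_even {u : ℝ} (hu : |u| < 1) :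
    ∑' n : ℕ, invSqrtCoeff (2 * n + 2) / ((n : ℝ) + 1) * u ^ (2 * n + 2)
      = -2 * log ((1 + √(1 - u)) / 2) - 2 * log ((1 + √(1 + u)) / 2) := by
  have hs : ∀ x : ℝ, |x| < 1 →
      Summable fun k : ℕ => invSqrtCoeff (k + 1) * x ^ (k + 1) / ((k : ℝ) + 1) := fun x hx => by
    refine ((summable_nat_add_iff 1).2
      (summable_geometric_of_lt_one (abs_nonneg x) hx)).of_norm_bounded fun k => ?_
    rw [norm_div, norm_mul, norm_pow, norm_eq_abs, norm_eq_abs,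
      norm_of_nonneg (by positivity : (0 : ℝ) ≤ k + 1)]
    refine div_le_of_le_mul₀ (by positivity) (by positivity) ?_
    rw [mul_comm]
    gcongr
    exact (abs_invSqrtCoeff_le_one _).trans (by linarith [k.cast_nonneg (α := ℝ)])
  have hadd := (hs u hu).add (hs (-u) (by rwa [abs_neg]))
  have h := tsum_even_add_odd (f := fun k : ℕ => invSqrtCoeff (k + 1) * u ^ (k + 1) / ((k : ℝ) + 1)
    + invSqrtCoeff (k + 1) * (-u) ^ (k + 1) / ((k : ℝ) + 1))
    (hadd.comp_injective (mul_right_injective₀ two_ne_zero))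
    (hadd.comp_injective ((add_left_injective 1).comp (mul_right_injective₀ two_ne_zero)))
  rw [(hs u hu).tsum_add (hs (-u) (by rwa [abs_neg])), tsum_invSqrtCoeff_div hu,
    tsum_invSqrtCoeff_div (by rwa [abs_neg]), sub_neg_eq_add] at h
  have hz : ∀ k : ℕ, invSqrtCoeff (2 * k + 1) * u ^ (2 * k + 1) / (((2 * k : ℕ) : ℝ) + 1)
      + invSqrtCoeff (2 * k + 1) * (-u) ^ (2 * k + 1) / (((2 * k : ℕ) : ℝ) + 1) = 0 := fun k => by
    rw [Odd.neg_pow ⟨k, rfl⟩]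
    ring
  simp only [hz, tsum_zero, zero_add] at h
  rw [sub_eq_add_neg, ← neg_mul, ← h]
  refine tsum_congr fun k => ?_
  rw [Even.neg_pow ⟨k + 1, by ring⟩]
  push_cast
  field_simp
  ring

lemma invSqrtCoeff_even (n : ℕ) :
    invSqrtCoeff (2 * n + 2)
      = 3 / 8 * (poch (5 / 4) n * poch (7 / 4) n / (poch (3 / 2) n * (n + 1).factorial)) := by
  induction n with
  | zero => norm_num [invSqrtCoeff, poch, Finset.prod_range_succ]
  | succ n ih =>
    rw [show 2 * (n + 1) + 2 = 2 * n + 2 + 1 + 1 by ring, invSqrtCoeff_succ, invSqrtCoeff_succ, ih,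
      poch_succ, poch_succ, poch_succ, Nat.factorial_succ (n + 1)]
    have := poch_pos (a := 3 / 2) (by norm_num) n
    push_cast
    field_simp
    ring

lemma poch_mul_poch_le (n : ℕ) : poch (5 / 4) n * poch (7 / 4) n ≤ poch (3 / 2) n ^ 2 := by
  induction n with
  | zero => simp [poch]
  | succ n ih =>
    rw [poch_succ, poch_succ, poch_succ]
    calc poch (5 / 4) n * (5 / 4 + n) * (poch (7 / 4) n * (7 / 4 + n))
        = poch (5 / 4) n * poch (7 / 4) n * ((5 / 4 + n) * (7 / 4 + n)) := by ring
      _ ≤ poch (3 / 2) n ^ 2 * (3 / 2 + n) ^ 2 := by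
          gcongr
          nlinarith
      _ = (poch (3 / 2) n * (3 / 2 + n)) ^ 2 := by ring

/-- Wallis' integral. -/
lemma integral_sin_pow_odd_half (n : ℕ) :
    ∫ θ in (0 : ℝ)..π / 2, sin θ ^ (2 * n + 1) = n.factorial / poch (3 / 2) n := by
  induction n with
  | zero => simp [poch]
  | succ n ih =>
    rw [show 2 * (n + 1) + 1 = 2 * n + 1 + 2 by ring, integral_sin_pow, ih, poch_succ,
      Nat.factorial_succ]
    have := poch_pos (a := 3 / 2) (by norm_num) n
    simp only [sin_zero, cos_zero, cos_pi_div_two]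
    push_cast
    field_simp
    ring

end Binomial

section Evaluation

open Real Set MeasureTheory

/-- An antiderivative of `(log (1 - y) - 2 log (1 + y)) (1 + y) / (y (1 - y))`. -/
noncomputable def dilogPrimitive (y : ℝ) : ℝ :=
  -Li2 y + 2 * Li2 (-y) - log (1 - y) ^ 2 - 4 * (Li2 ((1 - y) / 2) - log 2 * log (1 - y))

lemma hasDerivAt_dilogPrimitive {y : ℝ} (h0 : 0 < y) (h1 : y < 1) :
    HasDerivAt dilogPrimitive
      ((log (1 - y) - 2 * log (1 + y)) * ((1 + y) / (y * (1 - y)))) y := by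
  have hy : |y| < 1 := by rwa [abs_of_pos h0]
  have h1y : 0 < 1 - y := by linarith
  have h2y : 0 < 1 + y := by linarith
  have hlog := ((hasDerivAt_id' y).const_sub 1).log h1y.ne'
  refine (((((hasDerivAt_Li2 hy h0.ne').neg.add
    (((hasDerivAt_neg' y).comp_Li2 (by rwa [abs_neg]) (neg_ne_zero.2 h0.ne')).const_mul 2)).sub
    (hlog.fun_pow 2)).sub
    ((((((hasDerivAt_id' y).const_sub 1).div_const 2).comp_Li2
      (by rw [abs_of_pos (by positivity)]; linarith) (by positivity)).sub
      (hlog.const_mul (log 2))).const_mul 4))).congr_deriv ?_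
  rw [sub_neg_eq_add, show 1 - (1 - y) / 2 = (1 + y) / 2 by ring, log_div h2y.ne' two_ne_zero]
  field_simp
  ring

lemma continuousOn_dilogPrimitive : ContinuousOn dilogPrimitive (Ico 0 1) := by
  have hlog : ContinuousOn (fun y : ℝ => log (1 - y)) (Ico 0 1) :=
    ContinuousOn.log (by fun_prop) fun y hy => by linarith [hy.2]
  refine ((((continuousOn_Li2.mono ?_).neg.add (continuousOn_const.mul
    (ContinuousOn.comp_Li2 (by fun_prop) ?_))).sub (hlog.pow 2)).sub
    (continuousOn_const.mul ((ContinuousOn.comp_Li2 (by fun_prop) ?_).sub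
      (continuousOn_const.mul hlog))))
  all_goals
    rintro y ⟨hy0, hy1⟩
    constructor <;> linarith

lemma tsum_sin_pow_eq {θ : ℝ} (h0 : 0 < θ) (h1 : θ < π / 2) :
    ∑' n : ℕ, invSqrtCoeff (2 * n + 2) / ((n : ℝ) + 1) * sin θ ^ (2 * n + 1)
      = -2 * log (cos (θ / 2) * (1 + cos (θ / 2)) / 2) / sin θ := by
  have hs : 0 < sin θ := sin_pos_of_pos_of_lt_pi h0 (by linarith)
  have hc : 0 < cos (θ / 2) := cos_pos_of_mem_Ioo ⟨by linarith, by linarith⟩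
  have hs2 : 0 < sin (θ / 2) := sin_pos_of_pos_of_lt_pi (by linarith) (by linarith)
  have hs1 : sin θ < 1 := by
    rw [← sin_pi_div_two]
    exact sin_lt_sin_of_lt_of_le_pi_div_two (by linarith) le_rfl h1
  have hd : sin θ = 2 * sin (θ / 2) * cos (θ / 2) := by
    rw [← sin_two_mul]; congr 1; ring
  have hle : sin (θ / 2) ≤ cos (θ / 2) := by
    rw [← sin_pi_div_two_sub]
    exact sin_le_sin_of_le_of_le_pi_div_two (by linarith) (by linarith) (by linarith)
  have hsq := sin_sq_add_cos_sq (θ / 2)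
  have hm : √(1 - sin θ) = cos (θ / 2) - sin (θ / 2) := by
    rw [show 1 - sin θ = (cos (θ / 2) - sin (θ / 2)) ^ 2 by rw [hd]; linear_combination -hsq]
    exact sqrt_sq (by linarith)
  have hp : √(1 + sin θ) = cos (θ / 2) + sin (θ / 2) := by
    rw [show 1 + sin θ = (cos (θ / 2) + sin (θ / 2)) ^ 2 by rw [hd]; linear_combination -hsq]
    exact sqrt_sq (by linarith)
  have h := tsum_invSqrtCoeff_even (u := sin θ) (by rwa [abs_of_pos hs])
  have hmul : ∑' n : ℕ, invSqrtCoeff (2 * n + 2) / ((n : ℝ) + 1) * sin θ ^ (2 * n + 2)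
      = (∑' n : ℕ, invSqrtCoeff (2 * n + 2) / ((n : ℝ) + 1) * sin θ ^ (2 * n + 1)) * sin θ := by
    rw [← tsum_mul_right]
    exact tsum_congr fun n => by ring
  rw [eq_div_iff hs.ne', ← hmul, h, hm, hp, sub_eq_add_neg, ← neg_mul, ← mul_add,
    ← log_mul (by linarith) (by linarith)]
  congr 2
  linear_combination -hsq / 4

lemma integral_tsum_sin_pow :
    ∫ θ in (0 : ℝ)..π / 2, ∑' n : ℕ, invSqrtCoeff (2 * n + 2) / ((n : ℝ) + 1) * sin θ ^ (2 * n + 1)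
      = dilogPrimitive 0 - dilogPrimitive (3 - 2 * √2) := by
  have hcos : ∀ θ ∈ Icc 0 (π / 2), 0 < cos (θ / 2) := fun θ hθ =>
    cos_pos_of_mem_Ioo ⟨by linarith [hθ.1, pi_pos], by linarith [hθ.2, pi_pos]⟩
  have hcont : ContinuousOn
      (fun θ => -dilogPrimitive ((1 - cos (θ / 2)) / (1 + cos (θ / 2)))) (Icc 0 (π / 2)) := by
    refine (continuousOn_dilogPrimitive.comp (ContinuousOn.div (by fun_prop) (by fun_prop)
      fun θ hθ => ?_) fun θ hθ => ?_).neg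
    · linarith [hcos θ hθ]
    · have hc := hcos θ hθ
      refine ⟨div_nonneg (by linarith [cos_le_one (θ / 2)]) (by linarith), ?_⟩
      change (1 - cos (θ / 2)) / (1 + cos (θ / 2)) < 1
      rw [div_lt_one (by linarith)]
      linarith
  have hderiv : ∀ θ ∈ Ioo 0 (π / 2), HasDerivAt
      (fun θ => -dilogPrimitive ((1 - cos (θ / 2)) / (1 + cos (θ / 2))))
      (∑' n : ℕ, invSqrtCoeff (2 * n + 2) / ((n : ℝ) + 1) * sin θ ^ (2 * n + 1)) θ := by
    rintro θ ⟨h0, h1⟩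
    have hc := hcos θ ⟨h0.le, h1.le⟩
    have hs : 0 < sin (θ / 2) := sin_pos_of_pos_of_lt_pi (by linarith) (by linarith)
    have hsq := sin_sq_add_cos_sq (θ / 2)
    have hc1 : 0 < 1 - cos (θ / 2) := by nlinarith
    have hcθ : HasDerivAt (fun θ => cos (θ / 2)) (-sin (θ / 2) * (1 / 2)) θ :=
      ((hasDerivAt_id' θ).div_const 2).cos
    have hy0 : 0 < (1 - cos (θ / 2)) / (1 + cos (θ / 2)) := by positivity
    have hy1 : (1 - cos (θ / 2)) / (1 + cos (θ / 2)) < 1 := by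
      rw [div_lt_one (by linarith)]; linarith
    refine ((hasDerivAt_dilogPrimitive hy0 hy1).comp θ
      ((hcθ.const_sub 1).div (hcθ.const_add 1) (by positivity))).fun_neg.congr_deriv ?_
    have hd : sin θ = 2 * sin (θ / 2) * cos (θ / 2) := by
      rw [← sin_two_mul]; congr 1; ring
    rw [tsum_sin_pow_eq h0 h1, hd]
    generalize cos (θ / 2) = c at *
    generalize sin (θ / 2) = s at *
    rw [show 1 - (1 - c) / (1 + c) = 2 * c / (1 + c) by field_simp; ring,
      show 1 + (1 - c) / (1 + c) = 2 / (1 + c) by field_simp; ring,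
      log_div (by positivity) (by positivity), log_div (by positivity) (by positivity),
      log_div (by positivity) (by positivity), log_mul (by positivity) (by positivity),
      log_mul (by positivity) (by positivity)]
    have hs2 : s ^ 2 = (1 - c) * (1 + c) := by linarith
    field_simp
    rw [hs2]
    ring
  have hpi : 0 ≤ π / 2 := by positivity
  have hint := intervalIntegral.intervalIntegrable_deriv_of_nonneg
    (by rwa [uIcc_of_le hpi])
    (by rwa [min_eq_left hpi, max_eq_right hpi]) fun θ hθ => ?_
  · rw [intervalIntegral.integral_eq_sub_of_hasDerivAt_of_le hpi hcont hderiv hint,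
      show π / 2 / 2 = π / 4 by ring, cos_pi_div_four]
    have h2 : √2 ^ 2 = 2 := sq_sqrt zero_le_two
    rw [show (1 - √2 / 2) / (1 + √2 / 2) = 3 - 2 * √2 by
      rw [div_eq_iff (by positivity)]; linear_combination h2]
    norm_num
    ring
  · rw [min_eq_left hpi, max_eq_right hpi] at hθ
    have hs : 0 ≤ sin θ := sin_nonneg_of_nonneg_of_le_pi hθ.1.le (by linarith [hθ.2, pi_pos])
    exact tsum_nonneg fun n => mul_nonneg
      (div_nonneg (invSqrtCoeff_pos _).le (by positivity)) (by positivity)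

lemma summand_eq (n : ℕ) :
    (poch 1 n)^3 * poch (5/4) n * poch (7/4) n
        / (poch (3/2) n * poch (3/2) n * poch 2 n * poch 2 n * (Nat.factorial n))
      = 8 / 3 * (invSqrtCoeff (2 * n + 2) / ((n : ℝ) + 1) * (n.factorial / poch (3 / 2) n)) := by
  have := poch_pos (a := 3 / 2) (by norm_num) n
  rw [poch_one, poch_two, invSqrtCoeff_even, Nat.factorial_succ]
  push_cast
  field_simp

lemma tsum_summand_eq_integral :
    ∑' n : ℕ, invSqrtCoeff (2 * n + 2) / ((n : ℝ) + 1) * (n.factorial / poch (3 / 2) n)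
      = ∫ θ in (0 : ℝ)..π / 2,
          ∑' n : ℕ, invSqrtCoeff (2 * n + 2) / ((n : ℝ) + 1) * sin θ ^ (2 * n + 1) := by
  have hterm : ∀ n : ℕ, ∫ θ in Ioc 0 (π / 2),
      invSqrtCoeff (2 * n + 2) / ((n : ℝ) + 1) * sin θ ^ (2 * n + 1)
        = invSqrtCoeff (2 * n + 2) / ((n : ℝ) + 1) * (n.factorial / poch (3 / 2) n) := fun n => by
    rw [integral_const_mul, ← intervalIntegral.integral_of_le (by positivity),
      integral_sin_pow_odd_half]
  rw [intervalIntegral.integral_of_le (by positivity), ← integral_tsum_of_summable_integral_norm]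
  · exact tsum_congr fun n => (hterm n).symm
  · intro n
    exact (Continuous.integrableOn_Icc (by fun_prop)).mono_set Ioc_subset_Icc_self
  · have hnorm : ∀ n : ℕ, ∫ θ in Ioc 0 (π / 2),
        ‖invSqrtCoeff (2 * n + 2) / ((n : ℝ) + 1) * sin θ ^ (2 * n + 1)‖
          = invSqrtCoeff (2 * n + 2) / ((n : ℝ) + 1) * (n.factorial / poch (3 / 2) n) :=
      fun n => by
        rw [← hterm n]
        refine setIntegral_congr_fun measurableSet_Ioc fun θ hθ => norm_of_nonneg ?_
        have hs : 0 ≤ sin θ :=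
          sin_nonneg_of_nonneg_of_le_pi hθ.1.le (by linarith [hθ.2, pi_pos])
        exact mul_nonneg (div_nonneg (invSqrtCoeff_pos _).le (by positivity)) (by positivity)
    simp only [hnorm]
    refine summable_one_div_succ_sq.of_nonneg_of_le (fun n => ?_) fun n => ?_
    · exact mul_nonneg (div_nonneg (invSqrtCoeff_pos _).le (by positivity))
        (div_nonneg (by positivity) (poch_pos (by norm_num) n).le)
    · have h32 := poch_pos (a := 3 / 2) (by norm_num) n
      rw [invSqrtCoeff_even, Nat.factorial_succ]
      push_cast
      field_simp
      linarith [poch_mul_poch_le n, sq_nonneg (poch (3 / 2) n)]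

lemma dilogPrimitive_sub :
    dilogPrimitive 0 - dilogPrimitive (3 - 2 * √2)
      = -Li2 (3 - 2 * √2) + π ^ 2 / 12 - log 2 ^ 2 - log (√2 + 1) ^ 2
        + 2 * log (√2 + 1) * log 2 := by
  have h2 : √2 ^ 2 = 2 := sq_sqrt zero_le_two
  have hlt : 1 < √2 := by nlinarith [sqrt_nonneg 2]
  have hlt2 : √2 < 2 := by nlinarith [sqrt_nonneg 2]
  have hr : log (√2 - 1) = -log (√2 + 1) := by
    rw [← log_inv]
    congr 1
    exact eq_inv_of_mul_eq_one_left (by linear_combination h2)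
  have hs : log √2 = log 2 / 2 := log_sqrt zero_le_two
  have hr0 : √2 - 1 ≠ 0 := by linarith
  have hs0 : √2 ≠ 0 := by linarith
  have hA : log (1 - (√2 - 1)) = log 2 / 2 - log (√2 + 1) := by
    rw [show 1 - (√2 - 1) = √2 * (√2 - 1) by linear_combination -h2, log_mul hs0 hr0, hs, hr]
    ring
  have hC : log (1 + (√2 - 1) ^ 2) = 3 / 2 * log 2 - log (√2 + 1) := by
    rw [show 1 + (√2 - 1) ^ 2 = 2 * √2 * (√2 - 1) by linear_combination -h2,
      log_mul (by positivity) hr0, log_mul two_ne_zero hs0, hs, hr]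
    ring
  have hY : log (1 - (3 - 2 * √2)) = log 2 - log (√2 + 1) := by
    rw [show 1 - (3 - 2 * √2) = 2 * (√2 - 1) by ring, log_mul two_ne_zero hr0, hr]
    ring
  have hodd := Li2_sub_Li2_neg (t := √2 - 1) (by linarith) (by linarith)
  rw [show (1 - (√2 - 1)) / (1 + (√2 - 1)) = √2 - 1 by
    rw [div_eq_iff (by linarith)]; linear_combination -h2, hr] at hodd
  have hfive := Li2_five_term (t := √2 - 1) (by linarith) (by linarith)
  rw [hA, hC, show (√2 - 1) * (1 - (√2 - 1)) / (1 + (√2 - 1)) = 3 - 2 * √2 by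
      rw [div_eq_iff (by linarith)]; linear_combination h2,
    show (√2 - 1) * (1 + (√2 - 1)) / (1 + (√2 - 1) ^ 2) = 1 / 2 by
      rw [div_eq_iff (by positivity)]; linear_combination h2 / 2,
    show -(√2 - 1) ^ 2 = -(3 - 2 * √2) by linear_combination -h2,
    show 1 + (√2 - 1) = √2 by ring, hs, Li2_half] at hfive
  simp only [dilogPrimitive]
  rw [hY, show (1 - (3 - 2 * √2)) / 2 = √2 - 1 by ring, neg_zero, sub_zero, log_one, Li2_zero,
    Li2_half]
  linear_combination hodd + 2 * hfive

end Evaluation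

theorem fiveF4_value :
    ∑' n : ℕ,
        (poch 1 n)^3 * poch (5/4) n * poch (7/4) n
          / (poch (3/2) n * poch (3/2) n * poch 2 n * poch 2 n * (Nat.factorial n)) =
      -(8/3) * Li2 (3 - 2 * Real.sqrt 2) + 2 * Real.pi^2 / 9
        - (8/3) * (Real.log 2)^2
        - (8/3) * (Real.log (Real.sqrt 2 + 1))^2
        + (16/3) * Real.log (Real.sqrt 2 + 1) * Real.log 2 := by
  simp only [summand_eq, tsum_mul_left]
  rw [tsum_summand_eq_integral, integral_tsum_sin_pow, dilogPrimitive_sub]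
  ring
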